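/- Let G = (V,E) be a finite simple graph, Γ a group of automorphisms of G, L = (ℓ_1,…,ℓ_k) a sequence of distinct leaders with stabilizer-chain orbits O_i, and S = S(L) the SST cuts. Define G' = (V', E') by V' = V ∪ {v_{ℓ_i} : i = 1,…,k} (one new node per leader) and E' = E ∪ {{v_{ℓ_i}, f} : f ∈ O_i, i = 1,…,k} (in particular {v_{ℓ_i}, ℓ_i} ∈ E'). Then P(G,S) = {x ∈ ℝ^V : there exists y ∈ ℝ^{k} with (x,y) ∈ P(G') and x_{ℓ_i} + y_{v_{ℓ_i}} = 1 for all i = 1,…,k}, where P(G') is the stable set polytope of G'. -/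

import Mathlib

open Finset

/-- The stabilizer chain: `sstChain Γ ℓ 0 = Γ` and
`sstChain Γ ℓ (i+1)` is the pointwise stabilizer of `ℓ i` inside `sstChain Γ ℓ i`. -/
def sstChain {α : Type*} (Γ : Set (Equiv.Perm α)) (ℓ : ℕ → α) : ℕ → Set (Equiv.Perm α)
  | 0 => Γ
  | i + 1 => {γ ∈ sstChain Γ ℓ i | γ (ℓ i) = ℓ i}

/-- The orbit `O_i` of the leader `ℓ i` under the `i`-th group of the stabilizer chain. -/
def sstOrbit {α : Type*} (Γ : Set (Equiv.Perm α)) (ℓ : ℕ → α) (i : ℕ) : Set α :=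
  (fun γ : Equiv.Perm α => γ (ℓ i)) '' sstChain Γ ℓ i

/-- The SST cuts `S(L)`: pairs `(ℓ i, f)` with `f ∈ O_i \ {ℓ i}`, for `i < k`. -/
def sstCuts {α : Type*} (Γ : Set (Equiv.Perm α)) (ℓ : ℕ → α) (k : ℕ) : Set (α × α) :=
  {p | ∃ i < k, p.1 = ℓ i ∧ p.2 ∈ sstOrbit Γ ℓ i ∧ p.2 ≠ ℓ i}

/-- `I` is a stable set of `G`. -/
def IsStableSet {V : Type*} (G : SimpleGraph V) (I : Finset V) : Prop :=
  ∀ u ∈ I, ∀ v ∈ I, ¬ G.Adj u v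

/-- The indicator vector of a finite node set. -/
def indic {V : Type*} [DecidableEq V] (I : Finset V) : V → ℝ :=
  fun v => if v ∈ I then 1 else 0

/-- `P(G,S)`: the convex hull of the indicator vectors of stable sets satisfying
all the SST cuts in `S`. -/
def sstPolytope {V : Type*} [DecidableEq V] (G : SimpleGraph V) (S : Set (V × V)) :
    Set (V → ℝ) :=
  convexHull ℝ
    {x | ∃ I : Finset V, IsStableSet G I ∧ x = indic I ∧ ∀ p ∈ S, x p.2 ≤ x p.1}


/-- The stable set polytope `P(G)`: convex hull of indicator vectors of stable sets. -/
def stablePolytope {V : Type*} [DecidableEq V] (G : SimpleGraph V) : Set (V → ℝ) :=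
  convexHull ℝ {x | ∃ I : Finset V, IsStableSet G I ∧ x = indic I}

/-- The auxiliary graph `G'`: one new node per leader, joined to all members of the
leader's orbit (in particular to the leader itself); `G` is kept as an induced subgraph. -/
def extGraph {V : Type*} (G : SimpleGraph V) (Γ : Set (Equiv.Perm V)) (ℓ : ℕ → V)
    (k : ℕ) : SimpleGraph (V ⊕ Fin k) :=
  SimpleGraph.fromRel (fun p q =>
    match p, q with
    | Sum.inl u, Sum.inl v => G.Adj u v
    | Sum.inl f, Sum.inr i => f ∈ sstOrbit Γ ℓ i.1
    | _, _ => False)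

/-!
The hyperplanes `x_{ℓ i} + y_{v_{ℓ i}} = 1` come from the edge inequalities
`x_{ℓ i} + y_{v_{ℓ i}} ≤ 1`, so they cut out a face of `P(G')`, which is the convex hull of the
vertices of `P(G')` lying on it. Such a vertex is a stable set of `G'` containing exactly one of
`ℓ i` and `v_{ℓ i}` for every `i`: it is `I ∪ {v_{ℓ i} | ℓ i ∉ I}` for some `I ⊆ V`, and its
stability says that `I` is stable in `G` and avoids `O_i` whenever `ℓ i ∉ I`, which is what the
cuts require of `I`. Projecting the face to `ℝ^V` therefore yields `P(G,S)`.
-/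

section ConvexHullFace

variable {ι 𝕜 E : Type*} [Ring 𝕜] [PartialOrder 𝕜] [IsStrictOrderedRing 𝕜]
  [AddCommGroup E] [Module 𝕜 E]

theorem isExtreme_inter_ofPred_forall_eq {A : Set E} (f : ι → E →ₗ[𝕜] 𝕜) (c : ι → 𝕜)
    (hA : ∀ x ∈ A, ∀ i, f i x ≤ c i) :
    IsExtreme 𝕜 A (A ∩ {x | ∀ i, f i x = c i}) := by
  refine ⟨Set.inter_subset_left, ?_⟩
  rintro x hx y hy _ ⟨-, hz⟩ ⟨a, b, ha, hb, hab, rfl⟩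
  refine ⟨hx, fun i ↦ (hA x hx i).eq_of_not_lt fun hlt ↦ (hz i).not_lt ?_⟩
  calc f i (a • x + b • y) = a * f i x + b * f i y := by
        simp only [map_add, map_smul, smul_eq_mul]
    _ < a * c i + b * c i :=
        add_lt_add_of_lt_of_le (mul_lt_mul_of_pos_left hlt ha)
          (mul_le_mul_of_nonneg_left (hA y hy i) hb.le)
    _ = c i := by rw [← add_mul, hab, one_mul]

theorem convexHull_inter_eq_of_isExtreme {s F : Set E} (hsF : IsExtreme 𝕜 (convexHull 𝕜 s) F)
    (hF : Convex 𝕜 F) : convexHull 𝕜 (s ∩ F) = F := by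
  refine (convexHull_min Set.inter_subset_right hF).antisymm fun x hx ↦ ?_
  suffices hull_subset :
      convexHull 𝕜 s ⊆ {x ∈ convexHull 𝕜 s | x ∈ F → x ∈ convexHull 𝕜 (s ∩ F)} from
    (hull_subset (hsF.subset hx)).2 hx
  refine convexHull_min
    (fun y hy ↦ ⟨subset_convexHull 𝕜 s hy, fun hyF ↦ subset_convexHull 𝕜 _ ⟨hy, hyF⟩⟩) ?_
  refine convex_iff_openSegment_subset.2 fun y hy z hz w hw ↦
    ⟨(convex_convexHull 𝕜 s).openSegment_subset hy.1 hz.1 hw, fun hwF ↦ ?_⟩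
  have hyF : y ∈ F := hsF.left_mem_of_mem_openSegment hy.1 hz.1 hwF hw
  have hzF : z ∈ F := hsF.right_mem_of_mem_openSegment hy.1 hz.1 hwF hw
  exact (convex_convexHull 𝕜 _).openSegment_subset (hy.2 hyF) (hz.2 hzF) hw

theorem convexHull_inter_ofPred_forall_eq {s : Set E} (f : ι → E →ₗ[𝕜] 𝕜) (c : ι → 𝕜)
    (hs : ∀ x ∈ s, ∀ i, f i x ≤ c i) :
    convexHull 𝕜 s ∩ {x | ∀ i, f i x = c i} = convexHull 𝕜 (s ∩ {x | ∀ i, f i x = c i}) := by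
  have hull_le : ∀ x ∈ convexHull 𝕜 s, ∀ i, f i x ≤ c i := fun x hx i ↦
    convexHull_min (fun y hy ↦ hs y hy i) (convex_halfSpace_le (f i).isLinear (c i)) hx
  have convex_eq : Convex 𝕜 {x | ∀ i, f i x = c i} := by
    simp only [Set.ofPred_forall]
    exact convex_iInter fun i ↦ convex_hyperplane (f i).isLinear (c i)
  rw [← convexHull_inter_eq_of_isExtreme (isExtreme_inter_ofPred_forall_eq f c hull_le)
    ((convex_convexHull 𝕜 s).inter convex_eq), ← Set.inter_assoc,
    Set.inter_eq_self_of_subset_left (subset_convexHull 𝕜 s)]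

end ConvexHullFace

section Indicator

variable {V : Type*} [DecidableEq V] {I : Finset V} {u v : V}

theorem indic_le_indic_iff : indic I u ≤ indic I v ↔ (u ∈ I → v ∈ I) := by
  by_cases hu : u ∈ I <;> by_cases hv : v ∈ I <;> simp [indic, hu, hv]

theorem indic_add_indic_eq_one_iff : indic I u + indic I v = 1 ↔ (v ∈ I ↔ u ∉ I) := by
  by_cases hu : u ∈ I <;> by_cases hv : v ∈ I <;> simp [indic, hu, hv]

theorem indic_add_indic_le_one_iff : indic I u + indic I v ≤ 1 ↔ (u ∈ I → v ∉ I) := by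
  by_cases hu : u ∈ I <;> by_cases hv : v ∈ I <;> simp [indic, hu, hv]

theorem indic_comp_inl {ι : Type*} [DecidableEq ι] (J : Finset (V ⊕ ι)) :
    indic J ∘ Sum.inl = indic J.toLeft := by
  ext v
  simp [indic]

end Indicator

section LeaderGraph

variable {V ι : Type*}

/-- The cuts `x_f ≤ x_{l i}` for `f ∈ O i \ {l i}`, where the `O i` are arbitrary node sets in place
of the orbits of a stabilizer chain. As in `sstCuts`, the leader is the first component. -/
def leaderCuts (l : ι → V) (O : ι → Set V) : Set (V × V) :=
  {p | ∃ i, p.1 = l i ∧ p.2 ∈ O i ∧ p.2 ≠ l i}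

/-- The graph `G'` for arbitrary node sets `O i`: the graph `G` together with one new node
`Sum.inr i` for every `i`, joined to exactly the members of `O i`. -/
def leaderGraph (G : SimpleGraph V) (O : ι → Set V) : SimpleGraph (V ⊕ ι) where
  Adj
    | Sum.inl u, Sum.inl v => G.Adj u v
    | Sum.inl f, Sum.inr i => f ∈ O i
    | Sum.inr i, Sum.inl f => f ∈ O i
    | Sum.inr _, Sum.inr _ => False
  symm := ⟨by rintro (u | i) (v | j) h <;> first | exact h | exact G.adj_symm h⟩
  loopless := ⟨by rintro (u | i) h <;> first | exact h | exact G.irrefl h⟩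

/-- The affine subspace `x_{l i} + y_i = 1`, which meets the stable set polytope of `leaderGraph` in
a face. -/
def leaderFlat (l : ι → V) : Set (V ⊕ ι → ℝ) :=
  {z | ∀ i, z (Sum.inl (l i)) + z (Sum.inr i) = 1}

variable {G : SimpleGraph V} {O : ι → Set V} {l : ι → V}

theorem isStableSet_leaderGraph_iff {J : Finset (V ⊕ ι)} :
    IsStableSet (leaderGraph G O) J ↔
      IsStableSet G J.toLeft ∧ ∀ i, Sum.inr i ∈ J → ∀ f ∈ O i, f ∉ J.toLeft := by
  simp only [IsStableSet, Sum.forall, leaderGraph, mem_toLeft]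
  grind

variable [DecidableEq V]

theorem forall_leaderCuts_indic_le_iff {I : Finset V} :
    (∀ p ∈ leaderCuts l O, indic I p.2 ≤ indic I p.1) ↔
      ∀ i, l i ∉ I → ∀ f ∈ O i, f ∉ I := by
  simp only [indic_le_indic_iff, leaderCuts, Set.mem_ofPred_eq, Prod.forall]
  grind

variable [DecidableEq ι]

theorem indic_mem_leaderFlat_iff {J : Finset (V ⊕ ι)} :
    indic J ∈ leaderFlat l ↔ ∀ i, Sum.inr i ∈ J ↔ l i ∉ J.toLeft := by
  simp only [leaderFlat, Set.mem_ofPred_eq, indic_add_indic_eq_one_iff, mem_toLeft]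

theorem stablePolytope_leaderGraph_inter_leaderFlat (hl : ∀ i, l i ∈ O i) :
    stablePolytope (leaderGraph G O) ∩ leaderFlat l =
      convexHull ℝ ({z | ∃ J, IsStableSet (leaderGraph G O) J ∧ z = indic J} ∩ leaderFlat l) := by
  let coord (w : V ⊕ ι) : (V ⊕ ι → ℝ) →ₗ[ℝ] ℝ := LinearMap.proj w
  refine convexHull_inter_ofPred_forall_eq
    (fun i ↦ coord (Sum.inl (l i)) + coord (Sum.inr i)) (fun _ ↦ 1) ?_
  rintro _ ⟨J, hJ, rfl⟩ i
  exact indic_add_indic_le_one_iff.2 fun hli hi ↦ hJ _ hli _ hi (hl i)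

theorem image_comp_inl_stableSets_inter_leaderFlat [Finite ι] :
    (· ∘ Sum.inl) '' ({z | ∃ J, IsStableSet (leaderGraph G O) J ∧ z = indic J} ∩ leaderFlat l) =
      {x | ∃ I, IsStableSet G I ∧ x = indic I ∧ ∀ p ∈ leaderCuts l O, x p.2 ≤ x p.1} := by
  have := Fintype.ofFinite ι
  apply Set.Subset.antisymm
  · rintro _ ⟨_, ⟨⟨J, hJ, rfl⟩, hJl⟩, rfl⟩
    rw [isStableSet_leaderGraph_iff] at hJ
    rw [indic_mem_leaderFlat_iff] at hJl
    refine ⟨J.toLeft, hJ.1, indic_comp_inl J, ?_⟩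
    simp only [indic_comp_inl]
    exact forall_leaderCuts_indic_le_iff.2 fun i hi ↦ hJ.2 i ((hJl i).2 hi)
  · rintro _ ⟨I, hI, rfl, hcuts⟩
    rw [forall_leaderCuts_indic_le_iff] at hcuts
    refine ⟨indic (I.disjSum {i | l i ∉ I}), ⟨⟨_, ?_, rfl⟩, ?_⟩, ?_⟩
    · simpa [isStableSet_leaderGraph_iff] using ⟨hI, hcuts⟩
    · simp [indic_mem_leaderFlat_iff]
    · simp only [indic_comp_inl, toLeft_disjSum]

theorem sstPolytope_extendedFormulation_general [Finite ι] (G : SimpleGraph V) (l : ι → V)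
    (O : ι → Set V) (hl : ∀ i, l i ∈ O i) :
    sstPolytope G (leaderCuts l O) =
      {x | ∃ y : ι → ℝ, Sum.elim x y ∈ stablePolytope (leaderGraph G O) ∧
        ∀ i, x (l i) + y i = 1} := by
  calc sstPolytope G (leaderCuts l O)
      = LinearMap.funLeft ℝ ℝ Sum.inl '' (stablePolytope (leaderGraph G O) ∩ leaderFlat l) := by
        rw [stablePolytope_leaderGraph_inter_leaderFlat hl, LinearMap.image_convexHull]
        exact congrArg _ image_comp_inl_stableSets_inter_leaderFlat.symm
    _ = {x | ∃ y : ι → ℝ, Sum.elim x y ∈ stablePolytope (leaderGraph G O) ∧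
          ∀ i, x (l i) + y i = 1} := by
        ext x
        constructor
        · rintro ⟨z, ⟨hz, hzl⟩, rfl⟩
          exact ⟨z ∘ Sum.inr, (Sum.elim_comp_inl_inr z).symm ▸ hz, hzl⟩
        · rintro ⟨y, hxy, hxyl⟩
          exact ⟨Sum.elim x y, ⟨hxy, hxyl⟩, Sum.elim_comp_inl x y⟩

end LeaderGraph

section StabilizerChain

variable {V : Type*} {Γ : Set (Equiv.Perm V)} {ℓ : ℕ → V}

theorem one_mem_sstChain (hΓ : 1 ∈ Γ) : ∀ i, 1 ∈ sstChain Γ ℓ i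
  | 0 => hΓ
  | i + 1 => ⟨one_mem_sstChain hΓ i, rfl⟩

theorem self_mem_sstOrbit (hΓ : 1 ∈ Γ) (i : ℕ) : ℓ i ∈ sstOrbit Γ ℓ i :=
  ⟨1, one_mem_sstChain hΓ i, rfl⟩

theorem sstCuts_eq_leaderCuts (k : ℕ) :
    sstCuts Γ ℓ k = leaderCuts (fun i : Fin k ↦ ℓ i) fun i ↦ sstOrbit Γ ℓ i := by
  ext p
  simp only [sstCuts, leaderCuts, Set.mem_ofPred_eq, Fin.exists_iff, exists_prop]

theorem extGraph_eq_leaderGraph (G : SimpleGraph V) (k : ℕ) :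
    extGraph G Γ ℓ k = leaderGraph G fun i : Fin k ↦ sstOrbit Γ ℓ i := by
  ext (u | i) (v | j)
  · simpa [extGraph, leaderGraph, G.adj_comm v u] using SimpleGraph.Adj.ne
  all_goals simp [extGraph, leaderGraph]

end StabilizerChain

/-- The extended formulation of `P(G,S)` via the stable set polytope of the auxiliary
graph `G'`: `P(G,S)` is the projection of the face of `P(G')` given by
`x_{ℓ i} + y_{v_{ℓ i}} = 1` for all leaders `ℓ i`. -/
theorem sstPolytope_extendedFormulation
    {V : Type*} [Fintype V] [DecidableEq V] (G : SimpleGraph V)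
    (Γ : Subgroup (Equiv.Perm V))
    (hΓ : ∀ γ ∈ Γ, ∀ u v, G.Adj (γ u) (γ v) ↔ G.Adj u v)
    (k : ℕ) (ℓ : ℕ → V) (hdist : ∀ i < k, ∀ j < k, ℓ i = ℓ j → i = j) :
    sstPolytope G (sstCuts (↑Γ : Set (Equiv.Perm V)) ℓ k)
      = {x : V → ℝ | ∃ y : Fin k → ℝ,
          Sum.elim x y ∈ stablePolytope (extGraph G (↑Γ : Set (Equiv.Perm V)) ℓ k) ∧
          ∀ i : Fin k, x (ℓ i.1) + y i = 1} := by
  rw [sstCuts_eq_leaderCuts, extGraph_eq_leaderGraph]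
  exact sstPolytope_extendedFormulation_general G _ _ fun i ↦ self_mem_sstOrbit Γ.one_mem i
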